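/- Let H be a separable real Hilbert space and I ⊆ ℝ an interval. Then the space C(I, H_w) of weakly continuous functions u : I → H, endowed with the topology of uniform weak convergence on compact subintervals (the compact-open topology), is a separable Hausdorff topological space. -/

import Mathlib

open Filter Topology

theorem aux_locallyCompact (I : Set ℝ) (hI : I.OrdConnected) : LocallyCompactSpace I := by
  apply IsLocallyClosed.locallyCompactSpace
  have h := hI.isPreconnected.mem_intervals
  simp only [Set.mem_insert_iff, Set.mem_singleton_iff] at h
  rcases h with h | h | h | h | h | h | h | h | h | h <;> rw [h]
  · exact isClosed_Icc.isLocallyClosed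
  · rw [← Set.Ici_inter_Iio]
    exact isClosed_Ici.isLocallyClosed.inter isOpen_Iio.isLocallyClosed
  · rw [← Set.Ioi_inter_Iic]
    exact isOpen_Ioi.isLocallyClosed.inter isClosed_Iic.isLocallyClosed
  · exact isOpen_Ioo.isLocallyClosed
  · exact isClosed_Ici.isLocallyClosed
  · exact isOpen_Ioi.isLocallyClosed
  · exact isClosed_Iic.isLocallyClosed
  · exact isOpen_Iio.isLocallyClosed
  · exact isOpen_univ.isLocallyClosed
  · exact isOpen_empty.isLocallyClosed

theorem aux_tendsto_pi {X ι α : Type*} [TopologicalSpace X] {l : Filter α}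
    (F : α → C(X, ι → ℝ)) (f : C(X, ι → ℝ))
    (h : ∀ i, ∀ᶠ a in l, ∀ x, F a x i = f x i) : Tendsto F l (𝓝 f) := by
  rw [ContinuousMap.tendsto_iff_forall_isCompact_tendstoUniformlyOn]
  intro K _
  rw [tendstoUniformlyOn_iff_tendsto, Pi.uniformity, tendsto_iInf]
  intro i
  rw [tendsto_comap_iff]
  intro s hs
  have h2 : ∀ᶠ q in l ×ˢ 𝓟 K, ∀ x, F q.1 x i = f x i := (h i).prod_inl _
  rw [mem_map]
  filter_upwards [h2] with q hq
  simp only [Set.mem_preimage, Function.comp_apply, hq]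
  exact refl_mem_uniformity hs

theorem aux_proj_cont {H : Type*} [NormedAddCommGroup H] [InnerProductSpace ℝ H]
    (S : Submodule ℝ H) [FiniteDimensional ℝ S] :
    Continuous (fun x : WeakSpace ℝ H => S.starProjection ((toWeakSpace ℝ H).symm x)) := by
  have h1 := (WeakSpace.map (𝕜 := ℝ) S.orthogonalProjectionOnto).continuous
  have : FiniteDimensional ℝ (WeakSpace ℝ S) := (toWeakSpace ℝ S).finiteDimensional
  have h2 : Continuous (toWeakSpace ℝ S).symm :=
    LinearMap.continuous_of_finiteDimensional (toWeakSpace ℝ S).symm.toLinearMap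
  exact continuous_subtype_val.comp (h2.comp h1)

theorem aux_dense {H : Type*} [NormedAddCommGroup H] [InnerProductSpace ℝ H] [CompleteSpace H]
    (X : Type*) [TopologicalSpace X] :
    DenseRange (fun g : C(X, H) =>
      (ContinuousMap.comp ⟨toWeakSpaceCLM ℝ H, (toWeakSpaceCLM ℝ H).continuous⟩ g :
        C(X, WeakSpace ℝ H))) := by
  classical
  intro u
  let S : Finset H → Submodule ℝ H := fun F => Submodule.span ℝ (F : Set H)
  let v : Finset H → C(X, H) := fun F => ⟨_, (aux_proj_cont (S F)).comp u.continuous⟩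
  refine mem_closure_of_tendsto (b := atTop) (f := fun F => 
    (ContinuousMap.comp ⟨toWeakSpaceCLM ℝ H, (toWeakSpaceCLM ℝ H).continuous⟩ (v F) :
        C(X, WeakSpace ℝ H))) ?_ (Eventually.of_forall fun F => ⟨v F, rfl⟩)
  let e : C(WeakSpace ℝ H, StrongDual ℝ H → ℝ) :=
    ⟨_, WeakBilin.coeFn_continuous (topDualPairing ℝ H).flip⟩
  have he : IsInducing e := ⟨rfl⟩
  rw [(ContinuousMap.isInducing_postcomp (X := X) e he).tendsto_nhds_iff]
  apply aux_tendsto_pi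
  intro φ
  filter_upwards [eventually_ge_atTop {(InnerProductSpace.toDual ℝ H).symm φ}] with F hF x
  change φ ((S F).starProjection ((toWeakSpace ℝ H).symm (u x))) = φ ((toWeakSpace ℝ H).symm (u x))
  set y := (InnerProductSpace.toDual ℝ H).symm φ with hy
  have hφ : ∀ z, φ z = inner ℝ y z := fun z => by simp [hy]
  have hmem : y ∈ S F := Submodule.subset_span (by simpa using hF)
  rw [hφ, hφ, ← Submodule.inner_starProjection_left_eq_right,
    Submodule.starProjection_eq_self_iff.2 hmem]

/-- Let `H` be a separable real Hilbert space and `I ⊆ ℝ` an interval.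
Then `C(I, H_w)`, the space of weakly continuous functions `I → H` with the topology of
uniform weak convergence on compact subintervals (compact-open topology), is a separable
Hausdorff topological space. -/
theorem separable_t2_continuousMap_weak
    {H : Type*} [NormedAddCommGroup H] [InnerProductSpace ℝ H] [CompleteSpace H]
    [TopologicalSpace.SeparableSpace H]
    (I : Set ℝ) (hI : I.OrdConnected) :
    TopologicalSpace.SeparableSpace C(I, WeakSpace ℝ H) ∧ T2Space C(I, WeakSpace ℝ H) := by
  have := aux_locallyCompact I hI
  have : SecondCountableTopology H := UniformSpace.secondCountable_of_separable H
  refine ⟨?_, inferInstance⟩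
  exact (aux_dense (H := H) I).separableSpace (ContinuousMap.continuous_postcomp _)
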